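/- Every play-once n-person deterministic graphical game satisfying condition (C0) has a Nash equilibrium in pure stationary strategies. That is: suppose the DG game is play-once, meaning |Vᵢ| = 1 for every player i ∈ {1,…,n}, and the payoff u satisfies (C0): u(i, t) > u(i, c) for every player i, every terminal outcome t and every cyclic outcome c. Then there exists a strategy profile x such that for each player i and each profile x' differing from x only in player i's strategy, u(i, g(x)) ≥ u(i, g(x')). -/

import Mathlib

open Relation

/-- A vertex is terminal iff it has no outgoing edge. -/
def isTerminal {V : Type*} (E : V → V → Prop) (v : V) : Prop := ∀ w, ¬ E v w

/-- The strongly connected component of `v`: all vertices mutually reachable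
with `v` (reachability = reflexive-transitive closure of `E`). -/
def scc {V : Type*} (E : V → V → Prop) (v : V) : Set V :=
  {w | ReflTransGen E v w ∧ ReflTransGen E w v}

/-- A set of vertices is closed if no edge leaves it. -/
def IsClosed' {V : Type*} (E : V → V → Prop) (S : Set V) : Prop :=
  ∀ a ∈ S, ∀ b, E a b → b ∈ S

/-- A terminal outcome: a closed strongly connected component (in particular,
the singleton component of every terminal vertex). -/
def TerminalOutcome {V : Type*} (E : V → V → Prop) (S : Set V) : Prop :=
  (∃ v, S = scc E v) ∧ IsClosed' E S

/-- A cyclic outcome: a non-closed strongly connected component containing a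
directed cycle. -/
def CyclicOutcome {V : Type*} (E : V → V → Prop) (S : Set V) : Prop :=
  (∃ v, S = scc E v) ∧ ¬ IsClosed' E S ∧ ∃ a ∈ S, TransGen E a a

/-- A strategy profile, encoded as a global successor function: at every
non-terminal position it follows an edge chosen by the controlling player,
and it fixes the terminal positions. -/
def ValidProfile {V : Type*} (E : V → V → Prop) (s : V → V) : Prop :=
  ∀ v, (isTerminal E v → s v = v) ∧ (¬ isTerminal E v → E v (s v))

/-- The outcome of a strategy profile `s` from the initial position `v0`:
after `|V|` steps the play `v0, s v0, s (s v0), …` has entered its periodic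
part (the terminal vertex reached, or the eventual directed cycle), and the
outcome is the strongly connected component containing it. -/
def outcome {V : Type*} [Fintype V] (E : V → V → Prop) (v0 : V) (s : V → V) :
    Set V :=
  scc E (s^[Fintype.card V] v0)

/-- `x` is a Nash equilibrium (in pure stationary strategies): no player `i`
can strictly increase their payoff by a unilateral deviation, i.e. by
switching to a valid profile that agrees with `x` at every position not
controlled by `i`. -/
def IsNE {V : Type*} [Fintype V] (E : V → V → Prop) {n : ℕ}
    (control : V → Fin n) (v0 : V) (u : Fin n → Set V → ℝ) (x : V → V) : Prop :=
  ∀ (i : Fin n) (x' : V → V), ValidProfile E x' →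
    (∀ v, control v ≠ i → x' v = x v) →
    u i (outcome E v0 x) ≥ u i (outcome E v0 x')

section helpers

variable {V : Type*}

def TT (E : V → V → Prop) (v : V) : Prop := IsClosed' E (scc E v)

def RR (E : V → V → Prop) (w v : V) : Prop := E v w ∧ ¬ TT E v

def Lev (E : V → V → Prop) (e : V) : ℕ → V → Prop
  | 0, v => v = e
  | k + 1, v => ¬ Acc (RR E) v ∧ (∀ w, E v w → ¬ Acc (RR E) w) ∧ ∃ w, E v w ∧ Lev E e k w

theorem scc_eq {E : V → V → Prop} {a b : V} (h1 : ReflTransGen E a b)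
    (h2 : ReflTransGen E b a) : scc E a = scc E b := by
  ext w
  exact ⟨fun h => ⟨h2.trans h.1, h.2.trans h1⟩, fun h => ⟨h1.trans h.1, h.2.trans h2⟩⟩

theorem self_mem_scc (E : V → V → Prop) (a : V) : a ∈ scc E a := ⟨.refl, .refl⟩

theorem TT_of_terminal {E : V → V → Prop} {v : V} (h : isTerminal E v) : TT E v := by
  intro a ha b hb
  rcases ReflTransGen.cases_head ha.1 with h1 | ⟨c, hc, _⟩
  · subst h1; exact absurd hb (h b)
  · exact absurd hc (h c)

theorem TT_step {E : V → V → Prop} {v w : V} (h : TT E v) (hw : E v w) :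
    TT E w ∧ scc E w = scc E v := by
  have h1 : w ∈ scc E v := h v (self_mem_scc E v) w hw
  have h2 := scc_eq h1.1 h1.2
  refine ⟨?_, h2.symm⟩
  unfold TT at *
  rwa [← h2]

theorem TT_x {E : V → V → Prop} {x : V → V} (hx : ValidProfile E x) {v : V} (h : TT E v) :
    TT E (x v) ∧ scc E (x v) = scc E v := by
  by_cases ht : isTerminal E v
  · rw [(hx v).1 ht]; exact ⟨h, rfl⟩
  · exact TT_step h ((hx v).2 ht)

theorem TT_iter {E : V → V → Prop} {x : V → V} (hx : ValidProfile E x) {v : V} (h : TT E v)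
    (k : ℕ) : TT E (x^[k] v) ∧ scc E (x^[k] v) = scc E v := by
  induction k with
  | zero => exact ⟨h, rfl⟩
  | succ k ih =>
    rw [Function.iterate_succ_apply']
    have := TT_x hx ih.1
    exact ⟨this.1, this.2.trans ih.2⟩

theorem reach_x {E : V → V → Prop} {x : V → V} (hx : ValidProfile E x) (v : V) :
    ReflTransGen E v (x v) := by
  by_cases ht : isTerminal E v
  · rw [(hx v).1 ht]
  · exact .single ((hx v).2 ht)

theorem reach_iter {E : V → V → Prop} {x : V → V} (hx : ValidProfile E x) (v : V) (k : ℕ) :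
    ReflTransGen E v (x^[k] v) := by
  induction k with
  | zero => exact .refl
  | succ k ih =>
    rw [Function.iterate_succ_apply']
    exact ih.trans (reach_x hx _)

theorem periodic [Fintype V] (x : V → V) (v : V) :
    ∃ p, x^[p + 1] (x^[Fintype.card V] v) = x^[Fintype.card V] v := by
  obtain ⟨a, b, hab, h⟩ := Fintype.exists_ne_map_eq_of_card_lt
    (fun i : Fin (Fintype.card V + 1) => x^[i] v) (by simp)
  have key : ∀ a b : ℕ, a < b → b ≤ Fintype.card V → x^[a] v = x^[b] v →
      ∃ p, x^[p + 1] (x^[Fintype.card V] v) = x^[Fintype.card V] v := by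
    intro a b hab hb h
    refine ⟨b - a - 1, ?_⟩
    obtain ⟨m, hm⟩ := Nat.exists_eq_add_of_le (hab.le.trans hb)
    rw [← Function.iterate_add_apply]
    have e1 : b - a - 1 + 1 + Fintype.card V = m + b := by omega
    have e2 : Fintype.card V = m + a := by omega
    rw [e1]
    conv_rhs => rw [e2]
    rw [Function.iterate_add_apply, Function.iterate_add_apply, h]
  have hne : (a : ℕ) ≠ b := fun h => hab (Fin.ext h)
  rcases lt_or_gt_of_ne hne with h1 | h1
  · exact key a b h1 (by omega) h
  · exact key b a h1 (by omega) h.symm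

theorem outcome_step [Fintype V] {E : V → V → Prop} {x : V → V} (hx : ValidProfile E x) (v : V) :
    outcome E v x = outcome E (x v) x := by
  unfold outcome
  obtain ⟨p, hp⟩ := periodic x v
  rw [← Function.iterate_succ_apply, Function.iterate_succ_apply']
  refine scc_eq (reach_x hx _) ?_
  have := reach_iter hx (x (x^[Fintype.card V] v)) p
  rwa [← Function.iterate_succ_apply, hp] at this

theorem outcome_TT [Fintype V] {E : V → V → Prop} {x : V → V} (hx : ValidProfile E x) {v : V}
    (h : TT E v) : outcome E v x = scc E v := (TT_iter hx h _).2

theorem outcome_cyc [Fintype V] {E : V → V → Prop} {x : V → V} (hx : ValidProfile E x) {v : V}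
    (h : ¬ TT E (x^[Fintype.card V] v)) : CyclicOutcome E (outcome E v x) := by
  obtain ⟨p, hp⟩ := periodic x v
  refine ⟨⟨_, rfl⟩, h, _, self_mem_scc E _, ?_⟩
  have h1 : E (x^[Fintype.card V] v) (x (x^[Fintype.card V] v)) :=
    (hx _).2 fun ht => h (TT_of_terminal ht)
  have := reach_iter hx (x (x^[Fintype.card V] v)) p
  rw [← Function.iterate_succ_apply, hp] at this
  exact TransGen.head' h1 this

theorem exists_TT [Finite V] (E : V → V → Prop) (v : V) : ∃ z, ReflTransGen E v z ∧ TT E z := by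
  obtain ⟨z, hz, hmin⟩ := Set.exists_min_image {w | ReflTransGen E v w}
    (fun w => Set.ncard {y | ReflTransGen E w y}) (Set.toFinite _) ⟨v, .refl⟩
  refine ⟨z, hz, ?_⟩
  intro a ha b hb
  have hzb : ReflTransGen E z b := ha.1.tail hb
  refine ⟨hzb, ?_⟩
  have hsub : {y | ReflTransGen E b y} ⊆ {y | ReflTransGen E z y} := fun y hy => hzb.trans hy
  have := Set.eq_of_subset_of_ncard_le hsub (hmin b (ReflTransGen.trans hz hzb)) (Set.toFinite _)
  have h2 : z ∈ {y | ReflTransGen E b y} := by rw [this]; exact .refl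
  exact h2

theorem acc_TT {E : V → V → Prop} {v : V} (h : TT E v) : Acc (RR E) v :=
  ⟨_, fun _ hw => absurd h hw.2⟩

/-- Backward induction on the acyclic part. -/
theorem exists_tau [Finite V] (E : V → V → Prop) (f : V → Set V → ℝ) :
    ∃ (τ : V → Set V) (s : V → V), (∀ v, TT E v → τ v = scc E v) ∧
      ∀ v, Acc (RR E) v → ¬ TT E v → E v (s v) ∧ τ v = τ (s v) ∧
        ∀ w, E v w → f v (τ w) ≤ f v (τ v) := by
  classical
  have wf : WellFounded (fun w v => RR E w v ∧ Acc (RR E) v) := by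
    refine ⟨fun v => ?_⟩
    by_cases hv : Acc (RR E) v
    · induction hv with
      | intro v _ ih => exact ⟨_, fun w hw => ih w hw.1⟩
    · exact ⟨_, fun w hw => absurd hw.2 hv⟩
  have hne : ∀ v, ¬ TT E v → Nonempty {w // E v w} := by
    intro v hv
    by_contra hc
    exact hv (TT_of_terminal fun w hw => hc ⟨⟨w, hw⟩⟩)
  have hmax : ∀ v, ¬ TT E v → ∀ g : {w // E v w} → Set V, ∃ w, ∀ w', f v (g w') ≤ f v (g w) := by
    intro v hv g
    have := hne v hv
    exact Finite.exists_max fun w => f v (g w)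
  choose am ham using hmax
  let F : (v : V) → ((w : V) → (RR E w v ∧ Acc (RR E) v) → Set V) → Set V := fun v ih =>
    if h : Acc (RR E) v ∧ ¬ TT E v then
      ih (am v h.2 (fun w => ih w.1 ⟨⟨w.2, h.2⟩, h.1⟩)).1
        ⟨⟨(am v h.2 (fun w => ih w.1 ⟨⟨w.2, h.2⟩, h.1⟩)).2, h.2⟩, h.1⟩
    else scc E v
  let τ : V → Set V := wf.fix F
  have hτ : ∀ v, τ v = F v (fun w _ => τ w) := fun v => wf.fix_eq F v
  refine ⟨τ, fun v => if h : ¬ TT E v then (am v h (fun w => τ w.1)).1 else v, ?_, ?_⟩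
  · intro v hv
    rw [hτ]
    simp [F, hv]
  · intro v ha hv
    have e : τ v = τ (am v hv (fun w => τ w.1)).1 := by
      rw [hτ]
      simp only [F]
      rw [dif_pos ⟨ha, hv⟩]
    simp only [dif_pos hv]
    refine ⟨(am v hv (fun w => τ w.1)).2, e, fun w hw => ?_⟩
    rw [e]
    exact ham v hv (fun w => τ w.1) ⟨w, hw⟩

theorem exists_exit {E : V → V → Prop} {v z : V} (h : ReflTransGen E v z) (hz : Acc (RR E) z) :
    Acc (RR E) v ∨ ∃ e k, ¬ Acc (RR E) e ∧ (∃ w, E e w ∧ Acc (RR E) w) ∧ Lev E e k v := by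
  induction h using ReflTransGen.head_induction_on with
  | refl => exact .inl hz
  | head hab hbz ih =>
    rename_i a b
    by_cases ha : Acc (RR E) a
    · exact .inl ha
    right
    by_cases hex : ∃ w, E a w ∧ Acc (RR E) w
    · exact ⟨a, 0, ha, hex, rfl⟩
    · push Not at hex
      rcases ih with h1 | ⟨e, k, h1, h2, h3⟩
      · exact absurd h1 (hex b hab)
      · exact ⟨e, k + 1, h1, h2, ha, hex, b, hab, h3⟩

theorem Lev_next {E : V → V → Prop} {e v : V} (hv : v ≠ e) {k₀ : ℕ} (h : Lev E e k₀ v) :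
    (¬ Acc (RR E) v) ∧ ∃ y, E v y ∧ ¬ Acc (RR E) y ∧ ∀ k, Lev E e k v → ∃ k' < k, Lev E e k' y := by
  classical
  have hex : ∃ k, Lev E e k v := ⟨_, h⟩
  have hs := Nat.find_spec hex
  have hm : ∀ k, Lev E e k v → Nat.find hex ≤ k := fun k hk => Nat.find_min' hex hk
  generalize Nat.find hex = K at hs hm
  cases K with
  | zero => exact absurd hs hv
  | succ K =>
    obtain ⟨h1, h2, y, h3, h4⟩ := hs
    exact ⟨h1, y, h3, h2 y h3, fun k hk => ⟨K, hm k hk, h4⟩⟩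

end helpers

/-- Every play-once `n`-person deterministic graphical game (each player
controls exactly one position) whose payoff satisfies condition (C0)
(every terminal outcome is better than every cyclic outcome, for each player)
has a Nash equilibrium in pure stationary strategies. -/
theorem play_once_C0_Nash_solvable {V : Type*} [Fintype V]
    (E : V → V → Prop) {n : ℕ} (control : V → Fin n) (v0 : V)
    (hv0 : ¬ isTerminal E v0) (u : Fin n → Set V → ℝ)
    (hplayOnce : ∀ i : Fin n, ∃! v : V, ¬ isTerminal E v ∧ control v = i)
    (hC0 : ∀ (i : Fin n) (t c : Set V),
      TerminalOutcome E t → CyclicOutcome E c → u i t > u i c) :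
    ∃ x : V → V, ValidProfile E x ∧ IsNE E control v0 u x := by
  classical
  have huniq : ∀ v w, ¬ isTerminal E v → ¬ isTerminal E w → control v = control w → v = w :=
    fun v w hv hw h => (hplayOnce (control w)).unique ⟨hv, h⟩ ⟨hw, rfl⟩
  obtain ⟨τ, s, hτT, hτ⟩ := exists_tau E (fun v S => u (control v) S)
  have hterm : ∀ v, Acc (RR E) v → TerminalOutcome E (τ v) := by
    intro v hv
    induction hv with
    | intro v hv ih =>
      by_cases hT : TT E v
      · rw [hτT v hT]; exact ⟨⟨v, rfl⟩, hT⟩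
      · obtain ⟨h1, h2, _⟩ := hτ v ⟨_, hv⟩ hT
        rw [h2]; exact ih _ ⟨h1, hT⟩
  have hOut : ∀ x, ValidProfile E x → (∀ v, Acc (RR E) v → ¬ TT E v → x v = s v) →
      ∀ v, Acc (RR E) v → outcome E v x = τ v := by
    intro x hx hxs v hv
    induction hv with
    | intro v hv ih =>
      by_cases hT : TT E v
      · rw [hτT v hT, outcome_TT hx hT]
      · obtain ⟨h1, h2, _⟩ := hτ v ⟨_, hv⟩ hT
        rw [outcome_step hx, hxs v ⟨_, hv⟩ hT, h2]
        exact ih _ ⟨h1, hT⟩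
  -- a deviation at the position `p`
  have hDev : ∀ (x x' : V → V) (p : V), ValidProfile E x' → (∀ v, Acc (RR E) v → ¬ TT E v → x v = s v) →
      (∀ v, v ≠ p → x' v = x v) → ∀ v, Acc (RR E) v →
      u (control p) (outcome E v x') ≤ u (control p) (τ v) := by
    intro x x' p hx' hxs hag v hv
    induction hv with
    | intro v hv ih =>
      by_cases hT : TT E v
      · rw [hτT v hT, outcome_TT hx' hT]
      · obtain ⟨h1, h2, h3⟩ := hτ v ⟨_, hv⟩ hT
        rw [outcome_step hx']
        by_cases hvp : v = p
        · have hE : E v (x' v) := (hx' v).2 fun h => hT (TT_of_terminal h)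
          refine (ih _ ⟨hE, hT⟩).trans ?_
          have := h3 _ hE
          subst hvp
          exact this
        · rw [hag v hvp, hxs v ⟨_, hv⟩ hT, h2]
          exact ih _ ⟨h1, hT⟩
  have hAg : ∀ (x : V → V) (i : Fin n) (x' : V → V), ValidProfile E x → ValidProfile E x' →
      (∀ v, control v ≠ i → x' v = x v) →
      ∃ p, ¬ isTerminal E p ∧ control p = i ∧ ∀ v, v ≠ p → x' v = x v := by
    intro x i x' hx hx' h
    obtain ⟨p, ⟨hp1, hp2⟩, -⟩ := hplayOnce i
    refine ⟨p, hp1, hp2, fun v hv => ?_⟩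
    by_cases ht : isTerminal E v
    · rw [(hx v).1 ht, (hx' v).1 ht]
    · exact h v fun hc => hv (huniq v p ht hp1 (hc.trans hp2.symm))
  have hnt : ∀ v, ¬ TT E v → ¬ isTerminal E v := fun v h ht => h (TT_of_terminal ht)
  have hLT : ∀ v, ¬ Acc (RR E) v → ¬ TT E v := fun v h ht => h (acc_TT ht)
  by_cases hv0A : Acc (RR E) v0
  · have hch : ∀ v, ∃ y, (isTerminal E v → y = v) ∧ (¬ isTerminal E v → E v y) ∧
        (Acc (RR E) v → ¬ TT E v → y = s v) := by
      intro v
      by_cases ht : isTerminal E v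
      · exact ⟨v, fun _ => rfl, fun h => absurd ht h, fun _ h => absurd ht (hnt v h)⟩
      · by_cases h : Acc (RR E) v ∧ ¬ TT E v
        · exact ⟨s v, fun h => absurd h ht, fun _ => (hτ v h.1 h.2).1, fun _ _ => rfl⟩
        · have : ∃ w, E v w := by
            by_contra hc
            exact ht fun w hw => hc ⟨w, hw⟩
          obtain ⟨w, hw⟩ := this
          exact ⟨w, fun h => absurd h ht, fun _ => hw, fun h1 h2 => absurd ⟨h1, h2⟩ h⟩
    choose x hx1 hx2 hx3 using hch
    have hx : ValidProfile E x := fun v => ⟨hx1 v, hx2 v⟩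
    refine ⟨x, hx, ?_⟩
    intro i x' hx' h
    obtain ⟨p, hp, rfl, hag⟩ := hAg x i x' hx hx' h
    rw [hOut x hx hx3 v0 hv0A]
    exact hDev x x' p hx' hx3 hag v0 hv0A
  · obtain ⟨z, hz, hzT⟩ := exists_TT E v0
    obtain ⟨e, k0, heL, hex, hlev⟩ := (exists_exit hz (acc_TT hzT)).resolve_left hv0A
    obtain ⟨we, hwe1, hwe2, hwemax⟩ : ∃ w, E e w ∧ Acc (RR E) w ∧
        ∀ w', E e w' → Acc (RR E) w' → u (control e) (τ w') ≤ u (control e) (τ w) := by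
      obtain ⟨w, hw, hm⟩ := Set.exists_max_image {w | E e w ∧ Acc (RR E) w}
        (fun w => u (control e) (τ w)) (Set.toFinite _) hex
      exact ⟨w, hw.1, hw.2, fun w' h1 h2 => hm w' ⟨h1, h2⟩⟩
    have hch : ∀ v, ∃ y, (isTerminal E v → y = v) ∧ (¬ isTerminal E v → E v y) ∧
        (Acc (RR E) v → ¬ TT E v → y = s v) ∧ (v = e → y = we) ∧
        (¬ Acc (RR E) v → v ≠ e → ¬ Acc (RR E) y) ∧
        (∀ k, Lev E e k v → v ≠ e → ∃ k' < k, Lev E e k' y) := by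
      intro v
      by_cases hve : v = e
      · subst hve
        exact ⟨we, fun h => absurd h (hnt v (hLT v heL)), fun _ => hwe1, fun h => absurd h heL,
          fun _ => rfl, fun _ h => absurd rfl h, fun _ _ h => absurd rfl h⟩
      by_cases hA : Acc (RR E) v
      · have hnl : ∀ k, ¬ Lev E e k v := fun k hk => (Lev_next hve hk).1 hA
        by_cases hT : TT E v
        · by_cases ht : isTerminal E v
          · exact ⟨v, fun _ => rfl, fun h => absurd ht h, fun _ h => absurd hT h,
              fun h => absurd h hve, fun h => absurd hA h, fun k hk => absurd hk (hnl k)⟩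
          · have : ∃ w, E v w := by
              by_contra hc
              exact ht fun w hw => hc ⟨w, hw⟩
            obtain ⟨w, hw⟩ := this
            exact ⟨w, fun h => absurd h ht, fun _ => hw, fun _ h => absurd hT h,
              fun h => absurd h hve, fun h => absurd hA h, fun k hk => absurd hk (hnl k)⟩
        · exact ⟨s v, fun h => absurd h (hnt v hT), fun _ => (hτ v hA hT).1, fun _ _ => rfl,
              fun h => absurd h hve, fun h => absurd hA h, fun k hk => absurd hk (hnl k)⟩
      · by_cases hl : ∃ k, Lev E e k v
        · obtain ⟨k, hk⟩ := hl
          obtain ⟨-, y, h1, h2, h3⟩ := Lev_next hve hk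
          exact ⟨y, fun h => absurd h (hnt v (hLT v hA)), fun _ => h1, fun h => absurd h hA,
            fun h => absurd h hve, fun _ _ => h2, fun k hk _ => h3 k hk⟩
        · have : ∃ y, RR E y v ∧ ¬ Acc (RR E) y := by
            by_contra hc
            push Not at hc
            exact hA ⟨_, hc⟩
          obtain ⟨y, h1, h2⟩ := this
          exact ⟨y, fun h => absurd h (hnt v (hLT v hA)), fun _ => h1.1, fun h => absurd h hA,
            fun h => absurd h hve, fun _ _ => h2, fun k hk => absurd ⟨k, hk⟩ hl⟩
    choose x hx1 hx2 hx3 hx4 hx5 hx6 using hch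
    have hx : ValidProfile E x := fun v => ⟨hx1 v, hx2 v⟩
    -- the play reaches `e` and then `we`
    have hPlay : ∀ x', ValidProfile E x' → (∀ v, Acc (RR E) v → ¬ TT E v → x' v = s v) →
        (∀ k v, Lev E e k v → x' v = x v) → ∀ k v, Lev E e k v → outcome E v x' = τ we := by
      intro x' hx' hs hl k
      induction k using Nat.strong_induction_on with
      | _ k ih =>
        intro v hv
        rw [outcome_step hx', hl k v hv]
        by_cases hve : v = e
        · rw [hx4 v hve]
          exact hOut x' hx' hs we hwe2
        · obtain ⟨k', hk', h⟩ := hx6 v k hv hve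
          exact ih k' hk' _ h
    refine ⟨x, hx, ?_⟩
    intro i x' hx' h
    obtain ⟨p, hp, rfl, hag⟩ := hAg x i x' hx hx' h
    rw [hPlay x hx hx3 (fun _ _ _ => rfl) k0 v0 hlev]
    by_cases hpe : ¬ Acc (RR E) p ∧ p ≠ e ∧ ∃ w, E p w ∧ Acc (RR E) w
    · obtain ⟨hpL, hpne, w, hw1, hw2⟩ := hpe
      rw [hPlay x' hx' ?_ ?_ k0 v0 hlev]
      · intro v hv hT
        rw [hag v fun hc => hpL (hc ▸ hv), hx3 v hv hT]
      · intro k v hk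
        refine hag v fun hc => ?_
        subst hc
        cases k with
        | zero => exact hpne hk
        | succ k => exact hk.2.1 w hw1 hw2
    · have hleave : ∀ v, ¬ Acc (RR E) v → Acc (RR E) (x' v) →
          u (control p) (τ (x' v)) ≤ u (control p) (τ we) := by
        intro v hv hxv
        have hE : E v (x' v) := (hx' v).2 (hnt v (hLT v hv))
        by_cases hvp : v = p
        · subst hvp
          by_cases hve : v = e
          · subst hve
            exact hwemax _ hE hxv
          · exact absurd ⟨hv, hve, _, hE, hxv⟩ hpe
        · rw [hag v hvp] at hxv ⊢
          by_cases hve : v = e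
          · rw [hx4 v hve]
          · exact absurd hxv (hx5 v hv hve)
      have hB : ∀ k v, ¬ Acc (RR E) v → ¬ Acc (RR E) (x'^[k] v) ∨
          u (control p) (outcome E v x') ≤ u (control p) (τ we) := by
        intro k
        induction k with
        | zero => intro v hv; exact .inl hv
        | succ k ih =>
          intro v hv
          rw [Function.iterate_succ_apply, outcome_step hx']
          by_cases hA : Acc (RR E) (x' v)
          · right
            exact (hDev x x' p hx' hx3 hag _ hA).trans (hleave v hv hA)
          · exact ih _ hA
      rcases hB (Fintype.card V) v0 hv0A with h1 | h1
      · exact (hC0 _ _ _ (hterm we hwe2) (outcome_cyc hx' (hLT _ h1))).le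
      · exact h1
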